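/- (Proposition 5 and Corollary 3) For a Chaplygin system whose Lagrangian L is regular with respect to D and with respect to the Lie algebra g (i.e. (g_ab) = (Ẽ_a^v(Ẽ_b^v(L))) is nonsingular), the function L̃ = L − p_a v^a is a regular Lagrangian in some neighbourhood of C, is invariant under the action of G, and its Euler–Lagrange field Γ̃ is tangent to C; indeed the momentum of L̃ is p̃_a = Ẽ_a^v(L̃) = −g_{ab} v^b, whose zero level set is exactly C. Moreover φ_*Γ̃⁰, where Γ̃⁰ is the restriction of Γ̃ to C and φ is the section μ_a = p_a, is a solution of the vakonomic problem on the image of φ. -/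

import Mathlib

/-!
Restricted to `C`, a product `f v^a` retains only the differential of `v^a`: if `T` is a vector
field along `C`, then `T(f v^a) = f T(v^a)`.  Vertically, `Ẽ_a^v(L̃) = -g_{ab} v^b` and
`X_α^v(L̃) = p_α - X_α^v(p_a) v^a`, so on `C` the Hessian of `L̃` is block diagonal with blocks
`(g_{αβ})` and `-(g_{ab})`.  The families `p_a` and `v^a` transform contragrediently under the
`Ẽ_a^c`, which makes `p_a v^a`, and with it `L̃`, invariant.

Accordingly the vertical Euler–Lagrange equations of `L̃` say `g_{ab} T(v^b) = 0` on `C`, which is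
tangency.  For tangent `T` the horizontal equations are those of `L` up to the term
`p_a X_α^c(v^a) = -p_a R^a_{αβ} v^β`, which is the force in the vakonomic equations.
-/

open scoped BigOperators

section LiftCalculus

variable (FQ F : Type*) [CommRing FQ] [CommRing F] [Algebra ℝ FQ] [Algebra ℝ F]

/-- An algebraic model of the calculus of complete and vertical lifts on a tangent bundle
`τ : TQ → Q`.  Here `FQ` plays the role of the ring `C^∞(Q)` of smooth functions on the
configuration manifold `Q`, and `F` plays the role of `C^∞(TQ)`.  Vector fields on `Q`
(resp. on `TQ`) are modelled as `ℝ`-linear derivations of `FQ` (resp. of `F`).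
`pull` is the pullback `τ^* : C^∞(Q) → C^∞(TQ)`, `dot` is the total derivative
`f ↦ ḟ`, `ḟ(q,u) = u(f)`, and `clift`/`vlift` are the complete and vertical lifts of
vector fields.  The axioms listed are the standard identities of this calculus. -/
structure LiftCalc where
  pull : FQ →ₐ[ℝ] F
  dot : FQ →ₗ[ℝ] F
  clift : Derivation ℝ FQ FQ → Derivation ℝ F F
  vlift : Derivation ℝ FQ FQ → Derivation ℝ F F
  clift_add : ∀ Y Z, clift (Y + Z) = clift Y + clift Z
  vlift_add : ∀ Y Z, vlift (Y + Z) = vlift Y + vlift Z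
  clift_pull : ∀ Z f, clift Z (pull f) = pull (Z f)
  vlift_pull : ∀ Z f, vlift Z (pull f) = 0
  clift_dot : ∀ Z f, clift Z (dot f) = dot (Z f)
  vlift_dot : ∀ Z f, vlift Z (dot f) = pull (Z f)
  clift_smul : ∀ (f : FQ) (Z), clift (f • Z) = pull f • clift Z + dot f • vlift Z
  vlift_smul : ∀ (f : FQ) (Z), vlift (f • Z) = pull f • vlift Z
  bracket_cc : ∀ Y Z, ⁅clift Y, clift Z⁆ = clift ⁅Y, Z⁆
  bracket_cv : ∀ Y Z, ⁅clift Y, vlift Z⁆ = vlift ⁅Y, Z⁆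
  bracket_vv : ∀ Y Z, ⁅vlift Y, vlift Z⁆ = 0

variable {FQ F}

/-- A vector field `Γ` on `TQ` is a second-order differential equation field precisely
when `Γ(τ^*f) = ḟ` for every `f ∈ C^∞(Q)`. -/
def LiftCalc.IsSode (S : LiftCalc FQ F) (Γ : Derivation ℝ F F) : Prop :=
  ∀ f : FQ, Γ (S.pull f) = S.dot f

end LiftCalculus

section Constrained

variable (FQ F FC : Type*) [CommRing FQ] [CommRing F] [CommRing FC]
  [Algebra ℝ FQ] [Algebra ℝ F] [Algebra ℝ FC]
variable (ι κ : Type*) [Fintype ι] [Fintype κ] [DecidableEq ι] [DecidableEq κ]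

/-- An anholonomic frame on `Q` adapted to a constraint distribution `D` of corank `#κ`:
the frame members `X (Sum.inl α)` (the `X_α`, `α ∈ ι`) span `D`, while the `X (Sum.inr a)`
(the `X_a`, `a ∈ κ`) complete them to a full frame.  `qv i` is the quasi-velocity `v^i`
and `R k i j` the object of anholonomity, `[X_i, X_j] = R^k_{ij} X_k`.  The constraint
submanifold `C ⊂ TQ` is the common zero set of the `qv (Sum.inr a)` (i.e. `v^a = 0`). -/
structure NHFrame extends LiftCalc FQ F where
  X : ι ⊕ κ → Derivation ℝ FQ FQ
  qv : ι ⊕ κ → F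
  R : ι ⊕ κ → ι ⊕ κ → ι ⊕ κ → FQ
  bracket_frame : ∀ i j, ⁅X i, X j⁆ = ∑ k, R k i j • X k
  clift_qv : ∀ i j, clift (X i) (qv j) = -∑ k, pull (R j i k) * qv k
  vlift_qv : ∀ i j, vlift (X i) (qv j) = if j = i then 1 else 0
  dot_eq : ∀ f, dot f = ∑ i, qv i * pull (X i f)
  spanning : ∀ Z : Derivation ℝ FQ FQ, ∃ c : ι ⊕ κ → FQ, Z = ∑ i, c i • X i
  frame_indep : ∀ c : ι ⊕ κ → FQ, (∑ i, c i • X i) = 0 → ∀ i, c i = 0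

/-- The full data of a nonholonomically constrained system: an adapted frame together
with the constraint submanifold `C`, modelled through its ring of functions `FC = C^∞(C)`
and the restriction homomorphism `ρ : C^∞(TQ) → C^∞(C)`, which is surjective with kernel
the ideal generated by the constraint functions `v^a`.  The last two axioms say that the
restrictions to `C` of the lifted frame fields `X_i^c, X_i^v` form a frame along
`τ_C : C → Q`: every vector field along `C` is uniquely a combination of them. -/
structure NHSetup extends NHFrame FQ F ι κ where
  ρ : F →ₐ[ℝ] FC
  ρ_surj : Function.Surjective ρ
  ker_ρ : RingHom.ker (ρ : F →+* FC) = Ideal.span (Set.range fun a : κ => qv (Sum.inr a))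
  frameC_span : ∀ T : F →ₗ[ℝ] FC, (∀ a b : F, T (a * b) = ρ a * T b + ρ b * T a) →
    ∃ c d : ι ⊕ κ → FC, ∀ h : F,
      T h = ∑ i, c i * ρ (clift (X i) h) + ∑ i, d i * ρ (vlift (X i) h)
  frameC_indep : ∀ c d : ι ⊕ κ → FC,
    (∀ h : F, ∑ i, c i * ρ (clift (X i) h) + ∑ i, d i * ρ (vlift (X i) h) = 0) →
    (∀ i, c i = 0) ∧ (∀ i, d i = 0)

variable {FQ F FC ι κ}

/-- A vector field on (i.e. along) the constraint submanifold `C ⊂ TQ`: an `ℝ`-linear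
derivation from `C^∞(TQ)` to `C^∞(C)` along the restriction map `ρ`. -/
structure DerAlong (S : NHSetup FQ F FC ι κ) where
  toFun : F →ₗ[ℝ] FC
  leibniz' : ∀ a b : F, toFun (a * b) = S.ρ a * toFun b + S.ρ b * toFun a

/-- A vector field `Γ` on `C` is of second-order type iff `Γ(τ^*f) = ḟ|_C`. -/
def NHSetup.SodeOn (S : NHSetup FQ F FC ι κ) (Γ : DerAlong S) : Prop :=
  ∀ f : FQ, Γ.toFun (S.pull f) = S.ρ (S.dot f)

/-- A vector field `Γ` on `C` is tangent to `C` iff `Γ(v^a) = 0` for all `a`. -/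
def NHSetup.TangentC (S : NHSetup FQ F FC ι κ) (Γ : DerAlong S) : Prop :=
  ∀ a : κ, Γ.toFun (S.qv (Sum.inr a)) = 0

/-- The nonholonomic dynamics of the Lagrangian `L`: the vector field on `C`, of
second-order type and tangent to `C`, satisfying the Lagrange-d'Alembert equations
`Γ(X_α^v(L)) − X_α^c(L) = 0` on `C` for the frame `X_α` of `D`. -/
def NHSetup.IsNHDyn (S : NHSetup FQ F FC ι κ) (L : F) (Γ : DerAlong S) : Prop :=
  S.SodeOn Γ ∧ S.TangentC Γ ∧
    ∀ α : ι, Γ.toFun (S.vlift (S.X (Sum.inl α)) L) = S.ρ (S.clift (S.X (Sum.inl α)) L)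

/-- The multipliers `λ_a = Γ(X_a^v(L)) − X_a^c(L)` of a vector field on `C`. -/
def NHSetup.mult (S : NHSetup FQ F FC ι κ) (L : F) (Γ : DerAlong S) (a : κ) : FC :=
  Γ.toFun (S.vlift (S.X (Sum.inr a)) L) - S.ρ (S.clift (S.X (Sum.inr a)) L)

/-- `L` is regular with respect to `D`: the matrix `(X_α^v(X_β^v(L)))` is nonsingular
on `C`. -/
def NHSetup.RegularD (S : NHSetup FQ F FC ι κ) (L : F) : Prop :=
  IsUnit (Matrix.det (Matrix.of fun α β : ι =>
    S.ρ (S.vlift (S.X (Sum.inl α)) (S.vlift (S.X (Sum.inl β)) L))))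

/-- `L` is regular with respect to `D^⊥`: the matrix
`(g_{ab} − g^{αβ} g_{aα} g_{bβ})` is nonsingular on `C`. -/
def NHSetup.RegularDperp (S : NHSetup FQ F FC ι κ) (L : F) : Prop :=
  let gD : Matrix ι ι FC := Matrix.of fun α β =>
    S.ρ (S.vlift (S.X (Sum.inl α)) (S.vlift (S.X (Sum.inl β)) L))
  let gKI : Matrix κ ι FC := Matrix.of fun a β =>
    S.ρ (S.vlift (S.X (Sum.inr a)) (S.vlift (S.X (Sum.inl β)) L))
  let gIK : Matrix ι κ FC := Matrix.of fun α b =>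
    S.ρ (S.vlift (S.X (Sum.inl α)) (S.vlift (S.X (Sum.inr b)) L))
  let gK : Matrix κ κ FC := Matrix.of fun a b =>
    S.ρ (S.vlift (S.X (Sum.inr a)) (S.vlift (S.X (Sum.inr b)) L))
  IsUnit (Matrix.det (gK - gKI * gD⁻¹ * gIK))

end Constrained

section Vakonomic

variable {FQ F FC : Type*} [CommRing FQ] [CommRing F] [CommRing FC]
  [Algebra ℝ FQ] [Algebra ℝ F] [Algebra ℝ FC]
variable {ι κ : Type*} [Fintype ι] [Fintype κ] [DecidableEq ι] [DecidableEq κ]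

/-- A solution `Γ̂ = Γ_C + Γ_μ` of the vakonomic problem restricted to the image of the
section `φ : μ_a = φ_a` of `C × ℝ^{n−m} → C`.  Here `ΓC` is the component along `TQ`
(a vector field along `C`, of second-order type, but not necessarily tangent to `C`),
and `A a` is the `∂/∂μ_a`-component `Γ̂(μ_a)`.  The fields `eq_d` and `eq_t` are the
vakonomic Euler–Lagrange equations on `im(φ)`:
`Γ_C(X_α^v(L)) − X_α^c(L) = φ_a R^a_{αβ} v^β` and
`Γ_C(X_a^v(L)) − X_a^c(L) = φ_b R^b_{aα} v^α + A_a`. -/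
structure VakSol (S : NHSetup FQ F FC ι κ) (L : F) (φ : κ → FC) where
  ΓC : DerAlong S
  A : κ → FC
  sode : S.SodeOn ΓC
  eq_d : ∀ α : ι, ΓC.toFun (S.vlift (S.X (Sum.inl α)) L) = S.ρ (S.clift (S.X (Sum.inl α)) L)
      + ∑ a : κ, φ a *
        S.ρ (∑ β : ι, S.pull (S.R (Sum.inr a) (Sum.inl α) (Sum.inl β)) * S.qv (Sum.inl β))
  eq_t : ∀ a : κ, ΓC.toFun (S.vlift (S.X (Sum.inr a)) L) = S.ρ (S.clift (S.X (Sum.inr a)) L)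
      + ∑ b : κ, φ b *
        S.ρ (∑ α : ι, S.pull (S.R (Sum.inr b) (Sum.inr a) (Sum.inl α)) * S.qv (Sum.inl α))
      + A a

end Vakonomic

section InvertibleMatrices

variable {A m n : Type*} [CommRing A] [Fintype n]

theorem span_range_mulVec_le (M : Matrix m n A) (w : n → A) :
    Ideal.span (Set.range (M.mulVec w)) ≤ Ideal.span (Set.range w) := by
  rw [Ideal.span_le]
  rintro _ ⟨i, rfl⟩
  exact Ideal.sum_mem _ fun j _ => Ideal.mul_mem_left _ _ (Ideal.subset_span ⟨j, rfl⟩)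

theorem span_range_mulVec_of_isUnit_det [DecidableEq n] {M : Matrix n n A} (hM : IsUnit M.det)
    (w : n → A) :
    Ideal.span (Set.range (M.mulVec w)) = Ideal.span (Set.range w) := by
  refine (span_range_mulVec_le M w).antisymm ?_
  simpa [Matrix.mulVec_mulVec, Matrix.nonsing_inv_mul _ hM]
    using span_range_mulVec_le M⁻¹ (M.mulVec w)

theorem isUnit_det_neg [DecidableEq n] {M : Matrix n n A} (hM : IsUnit M.det) :
    IsUnit (-M).det :=
  (Matrix.isUnit_iff_isUnit_det _).1 ((Matrix.isUnit_iff_isUnit_det _).2 hM).neg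

end InvertibleMatrices

namespace LiftCalc

variable {FQ F : Type*} [CommRing FQ] [CommRing F] [Algebra ℝ FQ] [Algebra ℝ F]
  (S : LiftCalc FQ F)

theorem vlift_sum_smul {σ : Type*} (s : Finset σ) (c : σ → FQ) (Y : σ → Derivation ℝ FQ FQ)
    (h : F) :
    S.vlift (∑ k ∈ s, c k • Y k) h = ∑ k ∈ s, S.pull (c k) * S.vlift (Y k) h := by
  let vliftAt : Derivation ℝ FQ FQ →+ F :=
    AddMonoidHom.mk' (fun Y => S.vlift Y h) fun Y Z => by simp [S.vlift_add]
  have hsum := map_sum vliftAt (fun k => c k • Y k) s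
  simpa only [vliftAt, AddMonoidHom.mk'_apply, S.vlift_smul, Derivation.smul_apply,
    smul_eq_mul] using hsum

theorem vlift_vlift_comm (Y Z : Derivation ℝ FQ FQ) (h : F) :
    S.vlift Y (S.vlift Z h) = S.vlift Z (S.vlift Y h) := by
  rw [← sub_eq_zero, ← Derivation.commutator_apply, S.bracket_vv, Derivation.zero_apply]

theorem clift_vlift (Y Z : Derivation ℝ FQ FQ) (h : F) :
    S.clift Y (S.vlift Z h) = S.vlift Z (S.clift Y h) + S.vlift ⁅Y, Z⁆ h := by
  rw [← S.bracket_cv, Derivation.commutator_apply, add_sub_cancel]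

end LiftCalc

namespace NHFrame

variable {FQ F : Type*} [CommRing FQ] [CommRing F] [Algebra ℝ FQ] [Algebra ℝ F]
  {ι κ : Type*} [Fintype ι] [Fintype κ] [DecidableEq ι] [DecidableEq κ]
  (S : NHFrame FQ F ι κ) (L : F)

/-- The momentum `p_i = X_i^v(L)` conjugate to the quasi-velocity `v^i`. -/
def momentum (i : ι ⊕ κ) : F :=
  S.vlift (S.X i) L

/-- The Hessian `(X_i^v(X_j^v(L)))` of `L` in the velocities.  Its blocks `toBlocks₁₁` and
`toBlocks₂₂` are the matrices `(g_{αβ})` and `(g_{ab})`. -/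
def hessian : Matrix (ι ⊕ κ) (ι ⊕ κ) F :=
  Matrix.of fun i j => S.vlift (S.X i) (S.momentum L j)

/-- The Lagrangian `L̃ = L - p_a v^a`, summed over the directions complementary to `D` only. -/
def routhian : F :=
  L - ∑ a : κ, S.momentum L (Sum.inr a) * S.qv (Sum.inr a)

theorem hessian_isSymm : (S.hessian L).IsSymm :=
  Matrix.IsSymm.ext fun i j => S.vlift_vlift_comm (S.X j) (S.X i) L

theorem clift_momentum (i j : ι ⊕ κ) :
    S.clift (S.X i) (S.momentum L j)
      = S.vlift (S.X j) (S.clift (S.X i) L) + ∑ k, S.pull (S.R k i j) * S.momentum L k := by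
  rw [momentum, S.clift_vlift, S.bracket_frame, S.vlift_sum_smul]
  rfl

theorem derivation_routhian (D : Derivation ℝ F F) :
    D (S.routhian L)
      = D L - ∑ a : κ, (S.momentum L (Sum.inr a) * D (S.qv (Sum.inr a))
          + S.qv (Sum.inr a) * D (S.momentum L (Sum.inr a))) := by
  simp [routhian]

theorem momentum_routhian_inl (α : ι) :
    S.momentum (S.routhian L) (Sum.inl α)
      = S.momentum L (Sum.inl α)
        - ∑ a : κ, S.hessian L (Sum.inl α) (Sum.inr a) * S.qv (Sum.inr a) := by
  rw [momentum, derivation_routhian]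
  simp [S.vlift_qv, hessian, momentum, mul_comm]

theorem momentum_routhian_inr (a : κ) :
    S.momentum (S.routhian L) (Sum.inr a)
      = -∑ b : κ, S.hessian L (Sum.inr a) (Sum.inr b) * S.qv (Sum.inr b) := by
  rw [momentum, derivation_routhian]
  simp [S.vlift_qv, hessian, momentum, Finset.sum_add_distrib, mul_comm]

theorem span_range_momentum_routhian_inr (hg : IsUnit (S.hessian L).toBlocks₂₂.det) :
    Ideal.span (Set.range fun a : κ => S.momentum (S.routhian L) (Sum.inr a))
      = Ideal.span (Set.range fun a : κ => S.qv (Sum.inr a)) := by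
  have hp : (fun a : κ => S.momentum (S.routhian L) (Sum.inr a))
      = (-(S.hessian L).toBlocks₂₂).mulVec fun a => S.qv (Sum.inr a) := by
    funext a
    rw [momentum_routhian_inr, Matrix.neg_mulVec]
    rfl
  rw [hp, span_range_mulVec_of_isUnit_det (isUnit_det_neg hg)]

theorem clift_routhian_eq_zero {a : κ}
    (hD : ∀ b α, S.R (Sum.inr b) (Sum.inr a) (Sum.inl α) = 0)
    (hV : ∀ α b, S.R (Sum.inl α) (Sum.inr a) (Sum.inr b) = 0)
    (hL : S.clift (S.X (Sum.inr a)) L = 0) :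
    S.clift (S.X (Sum.inr a)) (S.routhian L) = 0 := by
  have hp (b : κ) : S.clift (S.X (Sum.inr a)) (S.momentum L (Sum.inr b))
      = ∑ c : κ, S.pull (S.R (Sum.inr c) (Sum.inr a) (Sum.inr b)) * S.momentum L (Sum.inr c) := by
    simp [clift_momentum, hL, hV]
  have hv (b : κ) : S.clift (S.X (Sum.inr a)) (S.qv (Sum.inr b))
      = -∑ c : κ, S.pull (S.R (Sum.inr b) (Sum.inr a) (Sum.inr c)) * S.qv (Sum.inr c) := by
    simp [S.clift_qv, hD]
  rw [derivation_routhian, hL, zero_sub, neg_eq_zero]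
  simp only [hp, hv, Finset.sum_add_distrib, mul_neg, Finset.sum_neg_distrib, Finset.mul_sum]
  rw [neg_add_eq_zero, Finset.sum_comm]
  exact Finset.sum_congr rfl fun b _ => Finset.sum_congr rfl fun c _ => by ring

end NHFrame

section AlongC

variable {FQ F FC : Type*} [CommRing FQ] [CommRing F] [CommRing FC]
  [Algebra ℝ FQ] [Algebra ℝ F] [Algebra ℝ FC]
  {ι κ : Type*} [Fintype ι] [Fintype κ] [DecidableEq ι] [DecidableEq κ]

/-- The restriction to `C` of a vector field on `TQ`. -/
def DerAlong.ofDerivation (S : NHSetup FQ F FC ι κ) (Γ : Derivation ℝ F F) : DerAlong S where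
  toFun := S.ρ.toLinearMap ∘ₗ (Γ : F →ₗ[ℝ] F)
  leibniz' a b := by simp

/-- The Euler–Lagrange equations of `L` at the points of `C`, for a vector field along `C` of
second-order type, which need not be tangent to `C`. -/
def NHSetup.IsEulerLagrangeOn (S : NHSetup FQ F FC ι κ) (L : F) (T : DerAlong S) : Prop :=
  S.SodeOn T ∧ ∀ i : ι ⊕ κ, T.toFun (S.momentum L i) = S.ρ (S.clift (S.X i) L)

theorem NHSetup.restrict_qv_inr (S : NHSetup FQ F FC ι κ) (a : κ) :
    S.ρ (S.qv (Sum.inr a)) = 0 := by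
  have hmem : S.qv (Sum.inr a) ∈ RingHom.ker (S.ρ : F →+* FC) :=
    S.ker_ρ ▸ Ideal.subset_span ⟨a, rfl⟩
  exact hmem

theorem NHSetup.restrict_clift_qv (S : NHSetup FQ F FC ι κ) (i j : ι ⊕ κ) :
    S.ρ (S.clift (S.X i) (S.qv j))
      = -S.ρ (∑ β : ι, S.pull (S.R j i (Sum.inl β)) * S.qv (Sum.inl β)) := by
  simp [S.clift_qv, S.restrict_qv_inr]

namespace DerAlong

variable {S : NHSetup FQ F FC ι κ} (T : DerAlong S) (L : F)

theorem map_sum_mul_qv_inr (f : κ → F) :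
    T.toFun (∑ a : κ, f a * S.qv (Sum.inr a))
      = ∑ a : κ, S.ρ (f a) * T.toFun (S.qv (Sum.inr a)) := by
  simp [T.leibniz', S.restrict_qv_inr]

theorem map_routhian :
    T.toFun (S.routhian L)
      = T.toFun L - ∑ a : κ, S.ρ (S.momentum L (Sum.inr a)) * T.toFun (S.qv (Sum.inr a)) := by
  rw [NHFrame.routhian, map_sub, map_sum_mul_qv_inr]

theorem map_momentum_routhian_inl (α : ι) :
    T.toFun (S.momentum (S.routhian L) (Sum.inl α))
      = T.toFun (S.momentum L (Sum.inl α))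
        - ∑ a : κ, S.ρ (S.hessian L (Sum.inl α) (Sum.inr a)) * T.toFun (S.qv (Sum.inr a)) := by
  rw [NHFrame.momentum_routhian_inl, map_sub, map_sum_mul_qv_inr]

theorem map_momentum_routhian_inr (a : κ) :
    T.toFun (S.momentum (S.routhian L) (Sum.inr a))
      = -∑ b : κ, S.ρ (S.hessian L (Sum.inr a) (Sum.inr b)) * T.toFun (S.qv (Sum.inr b)) := by
  rw [NHFrame.momentum_routhian_inr, map_neg, map_sum_mul_qv_inr]

end DerAlong

namespace NHSetup

variable (S : NHSetup FQ F FC ι κ) {L : F} {T : DerAlong S}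

theorem restrict_hessian_routhian (L : F) :
    (S.hessian (S.routhian L)).map S.ρ
      = Matrix.fromBlocks ((S.hessian L).toBlocks₁₁.map S.ρ) 0 0
          (-(S.hessian L).toBlocks₂₂.map S.ρ) := by
  have hinl (i : ι ⊕ κ) (β : ι) : S.ρ (S.hessian (S.routhian L) i (Sum.inl β))
      = S.ρ (S.hessian L i (Sum.inl β))
        - ∑ a : κ, S.ρ (S.hessian L (Sum.inl β) (Sum.inr a)) * if Sum.inr a = i then 1 else 0 := by
    simpa [DerAlong.ofDerivation, NHFrame.hessian, S.vlift_qv, apply_ite S.ρ] using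
      (DerAlong.ofDerivation S (S.vlift (S.X i))).map_momentum_routhian_inl L β
  have hinr (i : ι ⊕ κ) (b : κ) : S.ρ (S.hessian (S.routhian L) i (Sum.inr b))
      = -∑ c : κ, S.ρ (S.hessian L (Sum.inr b) (Sum.inr c)) * if Sum.inr c = i then 1 else 0 := by
    simpa [DerAlong.ofDerivation, NHFrame.hessian, S.vlift_qv, apply_ite S.ρ] using
      (DerAlong.ofDerivation S (S.vlift (S.X i))).map_momentum_routhian_inr L b
  have hsymm (i j : ι ⊕ κ) : S.ρ (S.hessian L i j) = S.ρ (S.hessian L j i) :=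
    congrArg S.ρ ((S.hessian_isSymm L).apply j i)
  ext (α | a) (β | b)
  · simp [hinl, Matrix.toBlocks₁₁]
  · simp [hinr]
  · simp [hinl, hsymm (Sum.inr a)]
  · simp [hinr, hsymm (Sum.inr a), Matrix.toBlocks₂₂]

theorem isUnit_det_restrict_hessian_routhian (hD : S.RegularD L)
    (hg : IsUnit ((S.hessian L).toBlocks₂₂.map S.ρ).det) :
    IsUnit ((S.hessian (S.routhian L)).map S.ρ).det := by
  rw [restrict_hessian_routhian, Matrix.det_fromBlocks_zero₂₁]
  exact IsUnit.mul hD (isUnit_det_neg hg)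

theorem tangentC_of_map_momentum_routhian_eq_zero
    (hg : IsUnit ((S.hessian L).toBlocks₂₂.map S.ρ).det)
    (hp : ∀ a : κ, T.toFun (S.momentum (S.routhian L) (Sum.inr a)) = 0) : S.TangentC T := by
  have hgv : ((S.hessian L).toBlocks₂₂.map S.ρ).mulVec (fun b => T.toFun (S.qv (Sum.inr b))) = 0 :=
    funext fun a => neg_eq_zero.1 ((T.map_momentum_routhian_inr L a).symm.trans (hp a))
  have hinj := Matrix.mulVec_injective_of_isUnit ((Matrix.isUnit_iff_isUnit_det _).2 hg)
  exact congrFun (hinj (hgv.trans (Matrix.mulVec_zero _).symm))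

theorem map_momentum_inl_of_isEulerLagrangeOn_routhian (hT : S.TangentC T)
    (hEL : S.IsEulerLagrangeOn (S.routhian L) T) (α : ι) :
    T.toFun (S.momentum L (Sum.inl α)) = S.ρ (S.clift (S.X (Sum.inl α)) L)
      + ∑ a : κ, S.ρ (S.momentum L (Sum.inr a)) *
        S.ρ (∑ β : ι, S.pull (S.R (Sum.inr a) (Sum.inl α) (Sum.inl β)) * S.qv (Sum.inl β)) := by
  have hleft : T.toFun (S.momentum (S.routhian L) (Sum.inl α))
      = T.toFun (S.momentum L (Sum.inl α)) := by
    simp [T.map_momentum_routhian_inl, hT _]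
  have hright : S.ρ (S.clift (S.X (Sum.inl α)) (S.routhian L))
      = S.ρ (S.clift (S.X (Sum.inl α)) L) - ∑ a : κ, S.ρ (S.momentum L (Sum.inr a)) *
        S.ρ (S.clift (S.X (Sum.inl α)) (S.qv (Sum.inr a))) :=
    (DerAlong.ofDerivation S (S.clift (S.X (Sum.inl α)))).map_routhian L
  rw [← hleft, hEL.2, hright]
  simp only [restrict_clift_qv, mul_neg, Finset.sum_neg_distrib, sub_neg_eq_add]

/-- The solution `φ_* T` of the vakonomic problem of `L` on the image of `φ : μ_a = p_a`, for a
vector field `T` tangent to `C` which satisfies the Euler–Lagrange equations of `L̃` on `C`. -/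
def vakSolOfRouthian (hD : ∀ b a α, S.R (Sum.inr b) (Sum.inr a) (Sum.inl α) = 0)
    (hL : ∀ a, S.clift (S.X (Sum.inr a)) L = 0) (hT : S.TangentC T)
    (hEL : S.IsEulerLagrangeOn (S.routhian L) T) :
    VakSol S L (fun a => S.ρ (S.momentum L (Sum.inr a))) where
  ΓC := T
  A a := T.toFun (S.momentum L (Sum.inr a))
  sode := hEL.1
  eq_d := S.map_momentum_inl_of_isEulerLagrangeOn_routhian hT hEL
  eq_t a := by simp [hL, hD, NHFrame.momentum]

end NHSetup

/-- The group action is replaced by an involutive complement of `D` (`hV`), with frame fields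
whose flows preserve `D` (`hD`).  For instance, left multiplication by the imaginary octonion units
gives such a frame on `S⁷`, with `R^c_{ab}` nonconstant, for which the kinetic energy of the round
metric is invariant. -/
theorem chaplygin_routhian_lagrangian_general (S : NHSetup FQ F FC ι κ) (L : F)
    (hD : ∀ b a α, S.R (Sum.inr b) (Sum.inr a) (Sum.inl α) = 0)
    (hV : ∀ α a b, S.R (Sum.inl α) (Sum.inr a) (Sum.inr b) = 0)
    (hL : ∀ a, S.clift (S.X (Sum.inr a)) L = 0)
    (hregD : S.RegularD L) (hreg_g : IsUnit (S.hessian L).toBlocks₂₂.det) :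
    IsUnit ((S.hessian (S.routhian L)).map S.ρ).det ∧
    (∀ a, S.clift (S.X (Sum.inr a)) (S.routhian L) = 0) ∧
    (∀ a, S.momentum (S.routhian L) (Sum.inr a)
      = -∑ b : κ, S.hessian L (Sum.inr a) (Sum.inr b) * S.qv (Sum.inr b)) ∧
    (Ideal.span (Set.range fun a : κ => S.momentum (S.routhian L) (Sum.inr a))
      = Ideal.span (Set.range fun a : κ => S.qv (Sum.inr a))) ∧
    (∀ T : DerAlong S, S.IsEulerLagrangeOn (S.routhian L) T →
      S.TangentC T ∧
      ∃ V : VakSol S L (fun a => S.ρ (S.momentum L (Sum.inr a))),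
        (∀ h : F, V.ΓC.toFun h = T.toFun h) ∧
        (∀ a, V.A a = T.toFun (S.momentum L (Sum.inr a)))) := by
  have hg : IsUnit ((S.hessian L).toBlocks₂₂.map S.ρ).det := by
    simpa only [AlgHom.map_det, AlgHom.mapMatrix_apply] using hreg_g.map S.ρ
  have hinv (a : κ) : S.clift (S.X (Sum.inr a)) (S.routhian L) = 0 :=
    S.clift_routhian_eq_zero L (fun b => hD b a) (fun α => hV α a) (hL a)
  refine ⟨S.isUnit_det_restrict_hessian_routhian hregD hg, hinv, S.momentum_routhian_inr L,
    S.span_range_momentum_routhian_inr L hreg_g, fun T hEL => ?_⟩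
  have hT : S.TangentC T := S.tangentC_of_map_momentum_routhian_eq_zero hg fun a => by
    rw [hEL.2, hinv, map_zero]
  exact ⟨hT, S.vakSolOfRouthian hD hL hT hEL, fun _ => rfl, fun _ => rfl⟩

end AlongC

/-- **Proposition 5 and Corollary 3.**  For a Chaplygin system whose
Lagrangian `L` is regular with respect to `D` and with respect to the Lie algebra `g`
(i.e. `(g_{ab}) = (Ẽ_a^v(Ẽ_b^v(L)))` is nonsingular), the function `L̃ = L − p_a v^a`
(with `p_a = Ẽ_a^v(L)`) is a regular Lagrangian in some neighbourhood of `C` (its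
Hessian is nonsingular on `C`), is invariant under the action of `G`
(`Ẽ_a^c(L̃) = 0`), and its momentum is `p̃_a = Ẽ_a^v(L̃) = −g_{ab} v^b`, whose zero
level set is exactly `C` (the `p̃_a` generate the same ideal as the constraints `v^a`).
Moreover any Euler–Lagrange field `Γ̃` of `L̃` is tangent to `C`, and `φ_*Γ̃⁰`, where
`Γ̃⁰` is the restriction of `Γ̃` to `C` and `φ` is the section `μ_a = p_a`, is a
solution of the vakonomic problem on the image of `φ`. -/
theorem chaplygin_routhian_lagrangian
    {FQ F FC : Type*} [CommRing FQ] [CommRing F] [CommRing FC]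
    [Algebra ℝ FQ] [Algebra ℝ F] [Algebra ℝ FC]
    {ι κ : Type*} [Fintype ι] [Fintype κ] [DecidableEq ι] [DecidableEq κ]
    (S : NHSetup FQ F FC ι κ) (L : F)
    -- Chaplygin structure:
    (Cc : κ → κ → κ → ℝ)
    (hEE : ∀ a b, ⁅S.X (Sum.inr a), S.X (Sum.inr b)⁆ = -∑ c, Cc c a b • S.X (Sum.inr c))
    (hEX : ∀ a α, ⁅S.X (Sum.inr a), S.X (Sum.inl α)⁆ = 0)
    (hR_aα : ∀ (k : ι ⊕ κ) a α, S.R k (Sum.inr a) (Sum.inl α) = 0)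
    (hR_αa : ∀ (k : ι ⊕ κ) α a, S.R k (Sum.inl α) (Sum.inr a) = 0)
    (hR_tt : ∀ c a b, S.R (Sum.inr c) (Sum.inr a) (Sum.inr b) = algebraMap ℝ FQ (-(Cc c a b)))
    (hR_td : ∀ γ a b, S.R (Sum.inl γ) (Sum.inr a) (Sum.inr b) = 0)
    (hinvL : ∀ a, S.clift (S.X (Sum.inr a)) L = 0)
    -- regularity with respect to `D` and with respect to `g`:
    (hregD : S.RegularD L)
    (hreg_g : IsUnit (Matrix.det (Matrix.of fun a b : κ =>
      S.vlift (S.X (Sum.inr a)) (S.vlift (S.X (Sum.inr b)) L))))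
    -- the Lagrangian `L̃ = L − p_a v^a`:
    (Ltil : F) (hLtil : Ltil = L - ∑ a : κ,
      S.vlift (S.X (Sum.inr a)) L * S.qv (Sum.inr a)) :
    -- `L̃` is regular on (a neighbourhood of) `C`:
    (IsUnit (Matrix.det (Matrix.of fun i j : ι ⊕ κ =>
      S.ρ (S.vlift (S.X i) (S.vlift (S.X j) Ltil))))) ∧
    -- `L̃` is `G`-invariant:
    (∀ a, S.clift (S.X (Sum.inr a)) Ltil = 0) ∧
    -- its momentum is `p̃_a = −g_{ab} v^b` …:
    (∀ a, S.vlift (S.X (Sum.inr a)) Ltil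
      = -∑ b : κ, S.vlift (S.X (Sum.inr a)) (S.vlift (S.X (Sum.inr b)) L)
          * S.qv (Sum.inr b)) ∧
    -- … whose zero level set is exactly `C`:
    (Ideal.span (Set.range fun a : κ => S.vlift (S.X (Sum.inr a)) Ltil)
      = Ideal.span (Set.range fun a : κ => S.qv (Sum.inr a))) ∧
    -- any Euler–Lagrange field `Γ̃` of `L̃` is tangent to `C`, and `φ_*Γ̃⁰` solves the
    -- vakonomic problem on the image of the section `φ : μ_a = p_a`:
    (∀ Γt : Derivation ℝ F F, S.toLiftCalc.IsSode Γt →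
      (∀ i : ι ⊕ κ, Γt (S.vlift (S.X i) Ltil) = S.clift (S.X i) Ltil) →
      (∀ a : κ, S.ρ (Γt (S.qv (Sum.inr a))) = 0) ∧
      ∃ V : VakSol S L (fun a => S.ρ (S.vlift (S.X (Sum.inr a)) L)),
        (∀ h : F, V.ΓC.toFun h = S.ρ (Γt h)) ∧
        (∀ a, V.A a = S.ρ (Γt (S.vlift (S.X (Sum.inr a)) L)))) := by
  subst hLtil
  obtain ⟨hreg, hinv, hmom, hspan, hEL⟩ := chaplygin_routhian_lagrangian_general S L
    (fun b => hR_aα (Sum.inr b)) hR_td hinvL hregD hreg_g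
  exact ⟨hreg, hinv, hmom, hspan, fun Γt hsode h => hEL (DerAlong.ofDerivation S Γt)
    ⟨fun f => congrArg S.ρ (hsode f), fun i => congrArg S.ρ (h i)⟩⟩
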